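/- arXiv:2501.04852 — 2 statements merged into one kernel-verified Lean document; each statement's English description precedes it below -/
import Mathlib

section
/- For every integer 0 ≤ δ ≤ 2^s − 1 and every g ∈ 𝓚, the principal ideal ⟨u(x+1)^δ + u² g(x)⟩ of 𝓡 is not self-dual. (In particular, no cyclic code of Type 3, i.e., of the form ⟨u(x+1)^δ + u²(x+1)^t h(x)⟩ with h zero or a unit, is self-dual.) -/
noncomputable section

open Polynomial

/-- The finite field `GF(2^m)`. -/
abbrev Fq (m : ℕ) : Type := GaloisField 2 m

/-- The ring `R₃ = F[u]/⟨u³⟩`. -/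
abbrev R3 (m : ℕ) : Type := AdjoinRoot (X ^ 3 : (Fq m)[X])

/-- The polynomial `x^{2^s} + 1` over `R₃`. -/
abbrev gR (m s : ℕ) : (R3 m)[X] := X ^ (2 ^ s) + 1

/-- The polynomial `x^{2^s} + 1` over `F`. -/
abbrev gK (m s : ℕ) : (Fq m)[X] := X ^ (2 ^ s) + 1

/-- The ring `𝓡 = R₃[x]/⟨x^{2^s}+1⟩`. -/
abbrev RR (m s : ℕ) : Type := AdjoinRoot (gR m s)

/-- The ring `𝓚 = F[x]/⟨x^{2^s}+1⟩`. -/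
abbrev KK (m s : ℕ) : Type := AdjoinRoot (gK m s)

/-- The element `u` of `R₃`. -/
def uu (m : ℕ) : R3 m := AdjoinRoot.root _

/-- The element `u` of `𝓡`. -/
def uR (m s : ℕ) : RR m s := algebraMap (R3 m) (RR m s) (uu m)

/-- The element `x` of `𝓡`. -/
def xR (m s : ℕ) : RR m s := AdjoinRoot.root _

/-- The element `x` of `𝓚`. -/
def xK (m s : ℕ) : KK m s := AdjoinRoot.root _

lemma gR_monic (m s : ℕ) : (gR m s).Monic := by
  have h : (gR m s) = X ^ (2 ^ s) + C 1 := by simp [gR]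
  rw [h]; exact monic_X_pow_add_C _ (by positivity)

lemma gK_monic (m s : ℕ) : (gK m s).Monic := by
  have h : (gK m s) = X ^ (2 ^ s) + C 1 := by simp [gK]
  rw [h]; exact monic_X_pow_add_C _ (by positivity)

/-- The standard representative (of degree `< 2^s`) of an element of `𝓡`. -/
def repR (m s : ℕ) (c : RR m s) : (R3 m)[X] := AdjoinRoot.modByMonicHom (gR_monic m s) c

/-- The standard representative (of degree `< 2^s`) of an element of `𝓚`. -/
def repK (m s : ℕ) (c : KK m s) : (Fq m)[X] := AdjoinRoot.modByMonicHom (gK_monic m s) c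

/-- The `j`-th coefficient of the standard representative of `c ∈ 𝓡`. -/
def coeffR (m s : ℕ) (c : RR m s) (j : ℕ) : R3 m := (repR m s c).coeff j

/-- The dot product on `𝓡`. -/
def dotR (m s : ℕ) (c d : RR m s) : R3 m :=
  ∑ j ∈ Finset.range (2 ^ s), coeffR m s c j * coeffR m s d j

/-- The dual of a set of codewords. -/
def dualSet (m s : ℕ) (S : Set (RR m s)) : Set (RR m s) :=
  {c | ∀ d ∈ S, dotR m s c d = 0}

/-- A cyclic code (ideal of `𝓡`) is self-dual if it coincides with its dual. -/
def IsSelfDual (m s : ℕ) (C : Ideal (RR m s)) : Prop :=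
  (C : Set (RR m s)) = dualSet m s (C : Set (RR m s))

/-- The annihilator of a set of codewords. -/
def annSet (m s : ℕ) (S : Set (RR m s)) : Set (RR m s) :=
  {c | ∀ d ∈ S, c * d = 0}

/-- The reciprocal `c*(x) = x^{deg c} c(x⁻¹)` of an element of `𝓡`. -/
def recip (m s : ℕ) (c : RR m s) : RR m s :=
  xR m s ^ (repR m s c).natDegree *
    Polynomial.aeval (Ring.inverse (xR m s)) (repR m s c)

/-- Reduction `R₃ → F` modulo `u`. -/
def epsR3 (m : ℕ) : R3 m →+* Fq m :=
  AdjoinRoot.lift (RingHom.id (Fq m)) 0 (by simp)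

lemma xK_pow_add_one (m s : ℕ) : (xK m s) ^ (2 ^ s) + 1 = 0 := by
  have h := AdjoinRoot.eval₂_root (gK m s)
  simpa [gK, xK] using h

lemma xR_pow_add_one (m s : ℕ) : (xR m s) ^ (2 ^ s) + 1 = 0 := by
  have h := AdjoinRoot.eval₂_root (gR m s)
  simpa [gR, xR] using h

/-- Reduction `μ : 𝓡 → 𝓚` modulo `u`. -/
def muRK (m s : ℕ) : RR m s →+* KK m s :=
  AdjoinRoot.lift ((algebraMap (Fq m) (KK m s)).comp (epsR3 m)) (xK m s) (by
    simp only [gR, eval₂_add, eval₂_pow, eval₂_X, eval₂_one]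
    exact xK_pow_add_one m s)

/-- The natural inclusion `𝓚 → 𝓡`. -/
def KtoR (m s : ℕ) : KK m s →+* RR m s :=
  AdjoinRoot.lift ((algebraMap (R3 m) (RR m s)).comp (algebraMap (Fq m) (R3 m))) (xR m s) (by
    simp only [gK, eval₂_add, eval₂_pow, eval₂_X, eval₂_one]
    exact xR_pow_add_one m s)

/-- The `i`-th torsion code of a set `S ⊆ 𝓡`. -/
def TorSet (m s : ℕ) (S : Set (RR m s)) (i : ℕ) : Set (KK m s) :=
  muRK m s '' {f | (uR m s) ^ i * f ∈ S}

/-- The torsion degree `T_i`: the (unique) `k` with `Tor_i = ⟨(x+1)^k⟩`. -/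
def Tdeg (m s : ℕ) (S : Set (RR m s)) (i : ℕ) : ℕ :=
  sInf {k | TorSet m s S i =
    ((Ideal.span {(xK m s + 1) ^ k} : Ideal (KK m s)) : Set (KK m s))}

/-- Substitution `h(x) ↦ h(x⁻¹)` on `𝓚`. -/
def invSub (m s : ℕ) (h : KK m s) : KK m s :=
  Polynomial.aeval (Ring.inverse (xK m s)) (repK m s h)


/-!
Every element `u(x+1)^δ + u²g` has the form `uh` with `h ∈ 𝓡`, and no ideal `C = ⟨uh⟩` is
self-dual. Suppose `C = C⊥`. Since `C ⊆ ⟨u⟩` and `u³ = 0`, we have `u² ∈ C⊥ = C`, say `u² = uhr`.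
Bilinearity of the dot product then puts `u - hr` in `C⊥ = C ⊆ ⟨h⟩`, so `h ∣ u`. But `u` is
irreducible in `𝓡`: the evaluation `x ↦ 1` is a local homomorphism `𝓡 → R₃`, because
`x - 1 = x + 1` is nilpotent, and `u` is irreducible in the chain ring `R₃`. So `h` is a unit
or an associate of `u`, and `u ∈ C` in both cases, in the second one because `C = ⟨u²⟩`
forces `u ∈ C⊥`. This contradicts `u · u = u² ≠ 0`.
-/

section SelfOrthogonal

variable {R A : Type*} [CommRing R] [CommRing A] [Algebra R A] (B : LinearMap.BilinForm R A)

theorem mem_orthogonal_restrictScalars_span_singleton {x a : A} :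
    a ∈ B.orthogonal ((Ideal.span {x}).restrictScalars R) ↔ ∀ t, B (x * t) a = 0 := by
  simp [LinearMap.BilinForm.mem_orthogonal_iff, Ideal.mem_span_singleton, dvd_def]

theorem apply_algebraMap_mul_algebraMap_mul (a b : R) (x y : A) :
    B (algebraMap R A a * x) (algebraMap R A b * y) = a * b * B x y := by
  simp only [← Algebra.smul_def, map_smul, LinearMap.smul_apply, smul_eq_mul]
  ring

variable {B}

theorem algebraMap_notMem_of_eq_orthogonal {I : Ideal A} {u : R}
    (hI : I.restrictScalars R = B.orthogonal (I.restrictScalars R)) (hB : u ^ 2 * B 1 1 ≠ 0) :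
    algebraMap R A u ∉ I := by
  intro hu
  have hu' : algebraMap R A u ∈ B.orthogonal (I.restrictScalars R) := hI ▸ hu
  refine hB ?_
  rw [sq, ← apply_algebraMap_mul_algebraMap_mul, mul_one]
  exact LinearMap.BilinForm.mem_orthogonal_iff.1 hu' _ hu

theorem dvd_algebraMap_of_span_eq_orthogonal {u : R} (hu : u ^ 3 = 0) {h : A}
    (hC : (Ideal.span {algebraMap R A u * h}).restrictScalars R =
      B.orthogonal ((Ideal.span {algebraMap R A u * h}).restrictScalars R)) :
    h ∣ algebraMap R A u := by
  set v := algebraMap R A u with hv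
  have dvd_iff (a : A) : v * h ∣ a ↔ ∀ t, B (v * h * t) a = 0 := by
    rw [← mem_orthogonal_restrictScalars_span_singleton, ← hC, Submodule.restrictScalars_mem,
      Ideal.mem_span_singleton]
  have dvd_sq : v * h ∣ v ^ 2 := by
    refine (dvd_iff _).2 fun t ↦ ?_
    rw [mul_assoc, hv, ← map_pow, ← mul_one (algebraMap R A (u ^ 2)),
      apply_algebraMap_mul_algebraMap_mul, ← pow_succ', hu, zero_mul]
  obtain ⟨r, hr⟩ := dvd_sq
  have dvd_sub : v * h ∣ v - h * r := by
    refine (dvd_iff _).2 fun t ↦ ?_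
    have mul_sub_eq_zero : v * (v - h * r) = 0 := by linear_combination hr
    calc B (v * h * t) (v - h * r)
        = B (h * t) (v * (v - h * r)) := by
          rw [mul_assoc, hv, ← Algebra.smul_def, ← Algebra.smul_def, map_smul, map_smul,
            LinearMap.smul_apply]
      _ = 0 := by rw [mul_sub_eq_zero, map_zero]
  exact (dvd_sub_left (dvd_mul_right h r)).1 ((dvd_mul_left h v).trans dvd_sub)

theorem span_algebraMap_mul_ne_orthogonal {u : R} (hu : u ^ 3 = 0) (hB : u ^ 2 * B 1 1 ≠ 0)
    (hirr : Irreducible (algebraMap R A u)) (h : A) :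
    (Ideal.span {algebraMap R A u * h}).restrictScalars R ≠
      B.orthogonal ((Ideal.span {algebraMap R A u * h}).restrictScalars R) := by
  intro hC
  refine algebraMap_notMem_of_eq_orthogonal hC hB ?_
  obtain ⟨k, hk⟩ := dvd_algebraMap_of_span_eq_orthogonal hu hC
  rcases hirr.isUnit_or_isUnit hk with h_unit | k_unit
  · exact Ideal.mem_span_singleton.2 (h_unit.mul_right_dvd.2 dvd_rfl)
  · obtain ⟨l, rfl⟩ : algebraMap R A u ∣ h := k_unit.dvd_mul_right.1 hk.dvd
    rw [← Submodule.restrictScalars_mem R, hC, mem_orthogonal_restrictScalars_span_singleton]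
    intro t
    rw [← mul_assoc, ← map_mul, mul_assoc, ← mul_one (algebraMap R A u),
      apply_algebraMap_mul_algebraMap_mul, ← pow_three', hu, zero_mul]

end SelfOrthogonal

theorem isLocalHom_lift_of_isNilpotent_root_sub {R : Type*} [CommRing R] {f : R[X]} {a : R}
    (hfa : f.eval₂ (RingHom.id R) a = 0)
    (hnil : IsNilpotent (AdjoinRoot.root f - AdjoinRoot.of f a)) :
    IsLocalHom (AdjoinRoot.lift (RingHom.id R) a hfa) := by
  refine ⟨fun c hc ↦ ?_⟩
  obtain ⟨p, rfl⟩ := AdjoinRoot.mk_surjective c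
  obtain ⟨q, hq⟩ := X_sub_C_dvd_sub_C_eval (a := a) (p := p)
  have hunit : IsUnit (AdjoinRoot.of f (p.eval a)) := by
    simpa using hc.map (AdjoinRoot.of f)
  have hdiff : AdjoinRoot.mk f p - AdjoinRoot.of f (p.eval a) =
      (AdjoinRoot.root f - AdjoinRoot.of f a) * AdjoinRoot.mk f q := by
    simpa using congrArg (AdjoinRoot.mk f) hq
  rw [← sub_add_cancel (AdjoinRoot.mk f p) (AdjoinRoot.of f (p.eval a)), hdiff]
  exact (Commute.isNilpotent_mul_right (Commute.all _ _) hnil).isUnit_add_right_of_commute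
    hunit (Commute.all _ _)

theorem irreducible_root_X_pow {F : Type*} [Field F] {n : ℕ} (hn : 2 ≤ n) :
    Irreducible (AdjoinRoot.root (X ^ n : F[X])) := by
  have hroot : (X ^ n : F[X]).eval₂ (RingHom.id F) 0 = 0 := by
    simp [show n ≠ 0 by omega]
  have hnil : IsNilpotent (AdjoinRoot.root (X ^ n : F[X]) - AdjoinRoot.of _ 0) :=
    ⟨n, by simpa using AdjoinRoot.eval₂_root (X ^ n : F[X])⟩
  have := isLocalHom_lift_of_isNilpotent_root_sub hroot hnil
  have X_dvd_of_not_isUnit {p : F[X]} (hp : ¬ IsUnit (AdjoinRoot.mk (X ^ n) p)) : X ∣ p := by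
    rw [← isUnit_map_iff (AdjoinRoot.lift (RingHom.id F) 0 hroot)] at hp
    simpa [X_dvd_iff, coeff_zero_eq_eval_zero] using hp
  refine ⟨fun h ↦ by simpa using h.map (AdjoinRoot.lift (RingHom.id F) 0 hroot), ?_⟩
  intro a b hab
  obtain ⟨p, rfl⟩ := AdjoinRoot.mk_surjective a
  obtain ⟨q, rfl⟩ := AdjoinRoot.mk_surjective b
  by_contra! hpq
  have hdvd_mul : (X : F[X]) ^ 2 ∣ p * q := by
    rw [sq]
    exact mul_dvd_mul (X_dvd_of_not_isUnit hpq.1) (X_dvd_of_not_isUnit hpq.2)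
  have hdvd_sub : (X : F[X]) ^ 2 ∣ X - p * q := by
    rw [← map_mul, ← AdjoinRoot.mk_X, AdjoinRoot.mk_eq_mk] at hab
    exact (pow_dvd_pow X hn).trans hab
  have hdvd : (X : F[X]) ^ 2 ∣ X ^ 1 := by
    simpa only [pow_one] using (dvd_sub_left hdvd_mul).1 hdvd_sub
  exact absurd ((pow_dvd_pow_iff X_ne_zero not_isUnit_X).1 hdvd) (by decide)

section Codes

variable (m s : ℕ)

instance nontrivial_R3 : Nontrivial (R3 m) := AdjoinRoot.nontrivial _ (by simp)

theorem uu_pow_three : uu m ^ 3 = 0 := by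
  rw [uu, ← AdjoinRoot.mk_X, ← map_pow, AdjoinRoot.mk_self]

theorem uu_sq_ne_zero : uu m ^ 2 ≠ 0 := by
  rw [uu, ← AdjoinRoot.mk_X, ← map_pow, Ne, AdjoinRoot.mk_eq_zero,
    pow_dvd_pow_iff X_ne_zero not_isUnit_X]
  decide

instance charP_R3 : CharP (R3 m) 2 :=
  charP_of_injective_algebraMap' (Fq m) 2

theorem eval_one_gR : (gR m s).eval₂ (RingHom.id (R3 m)) 1 = 0 := by
  simp [CharTwo.add_self_eq_zero]

theorem gR_eq_pow : gR m s = (X - C 1) ^ 2 ^ s := by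
  rw [sub_pow_char_pow, map_one, one_pow, gR, CharTwo.sub_eq_add]

theorem isNilpotent_root_gR_sub_one :
    IsNilpotent (AdjoinRoot.root (gR m s) - AdjoinRoot.of (gR m s) 1) := by
  refine ⟨2 ^ s, ?_⟩
  rw [← AdjoinRoot.mk_X, ← AdjoinRoot.mk_C, ← map_sub, ← map_pow, ← gR_eq_pow, AdjoinRoot.mk_self]

theorem irreducible_uR : Irreducible (uR m s) := by
  have := isLocalHom_lift_of_isNilpotent_root_sub (eval_one_gR m s)
    (isNilpotent_root_gR_sub_one m s)
  refine Irreducible.of_map (f := AdjoinRoot.lift (RingHom.id _) 1 (eval_one_gR m s)) ?_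
  simpa [uR, uu] using irreducible_root_X_pow (F := Fq m) (n := 3) (by decide)

/-- The dot product `dotR` as a bilinear form over `R₃`, for which the dual of a code is its
orthogonal submodule. -/
def dotForm : LinearMap.BilinForm (R3 m) (RR m s) :=
  ∑ j ∈ Finset.range (2 ^ s),
    let coord := lcoeff (R3 m) j ∘ₗ AdjoinRoot.modByMonicHom (gR_monic m s)
    LinearMap.BilinForm.linMulLin coord coord

theorem dotForm_apply (c d : RR m s) : dotForm m s c d = dotR m s c d := by
  simp [dotForm, dotR, coeffR, repR]

theorem dotR_comm (c d : RR m s) : dotR m s c d = dotR m s d c := by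
  simp only [dotR, mul_comm]

theorem repR_one : repR m s 1 = 1 := by
  rw [repR, ← map_one (AdjoinRoot.mk (gR m s)), AdjoinRoot.modByMonicHom_mk,
    modByMonic_eq_self_iff (gR_monic m s), gR, ← map_one C, degree_X_pow_add_C (by positivity)]
  exact degree_C_le.trans_lt (by exact_mod_cast Nat.two_pow_pos s)

theorem dotR_one_one : dotR m s 1 1 = 1 := by
  simp [dotR, coeffR, repR_one, coeff_one]

theorem isSelfDual_iff {C : Ideal (RR m s)} : IsSelfDual m s C ↔
    C.restrictScalars (R3 m) = (dotForm m s).orthogonal (C.restrictScalars (R3 m)) := by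
  simp only [IsSelfDual, Set.ext_iff, SetLike.ext_iff, SetLike.mem_coe, dualSet, Set.mem_ofPred_eq,
    Submodule.restrictScalars_mem, LinearMap.BilinForm.mem_orthogonal_iff, dotForm_apply, dotR_comm]

end Codes

theorem stmt4_general (m s : ℕ) (h : RR m s) :
    ¬ IsSelfDual m s (Ideal.span {uR m s * h}) := by
  rw [isSelfDual_iff]
  refine span_algebraMap_mul_ne_orthogonal (uu_pow_three m) ?_ (irreducible_uR m s) h
  rw [dotForm_apply, dotR_one_one, mul_one]
  exact uu_sq_ne_zero m

/-- For every `0 ≤ δ ≤ 2^s − 1` and `g ∈ 𝓚`, the principal ideal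
`⟨u(x+1)^δ + u² g(x)⟩` of `𝓡` is not self-dual. -/
theorem stmt4 (m s : ℕ) (hm : 0 < m) (hs : 0 < s) :
    ∀ δ : ℕ, δ ≤ 2 ^ s - 1 → ∀ g : KK m s,
      ¬ IsSelfDual m s
        (Ideal.span {uR m s * (xR m s + 1) ^ δ + uR m s ^ 2 * KtoR m s g}) := by
  intro δ _ g
  simpa only [mul_add, ← mul_assoc, ← sq] using
    stmt4_general m s ((xR m s + 1) ^ δ + uR m s * KtoR m s g)
end
end

section
/- Let 1 ≤ a ≤ 2^s − 1 and let C be an ideal of 𝓡 with Tor_0(C) = ⟨(x+1)^a⟩, Tor_1(C) = ⟨(x+1)^{2^{s-1}}⟩ and Tor_2(C) = ⟨(x+1)^{2^s−a}⟩. Suppose there exist f₁, f₂, f₃ ∈ 𝓚 such that (x+1)^a + u f₁(x) + u² f₂(x) ∈ 𝒜(C) and u(x+1)^{2^{s-1}} + u² f₃(x) ∈ 𝒜(C). Then 𝒜(C) = ⟨(x+1)^a + u f₁(x) + u² f₂(x), u(x+1)^{2^{s-1}} + u² f₃(x), u²(x+1)^{2^s−a}⟩. -/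
noncomputable section

open Polynomial

/-!
Multiplication by `uⁿ` identifies `R / uR` with `uⁿR`, so an equation `uⁱc · uʲd = 0` with
`i + j = n` only sees the residues of `c` and `d`. Hence if `uⁱc` annihilates an ideal `C`, the
residue of `c` annihilates the torsion code `Tor_{n-i}(C)`. If the annihilator of that code is
generated by the residue of `gᵢ` and `uⁱgᵢ` itself annihilates `C`, subtracting a multiple of `uⁱgᵢ`
replaces `uⁱc` by some `uⁱ⁺¹c'` annihilating `C`; since `uⁿ⁺¹ = 0` this division terminates. In
`F[x]/⟨(x+1)^N⟩` the annihilator of `⟨(x+1)^t⟩` is `⟨(x+1)^{N-t}⟩`, which supplies the residues of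
the generators.
-/

section Thickening

variable {R K : Type*} [CommRing R] [CommRing K]

/-- `μ : R → K` exhibits `R` as a thickening of `K` of the shape `K[u]/⟨uⁿ⁺¹⟩ → K`, flat in `u`:
`K` is `R / uR`, `uⁿ⁺¹ = 0`, and the annihilator of `uⁿ` is no larger than `uR`. The reduction of
a finite chain ring modulo its uniformizer `u`, and `𝓡 → 𝓚`, are of this form. -/
structure IsFlatThickening (μ : R →+* K) (u : R) (n : ℕ) : Prop where
  surjective : Function.Surjective μ
  map_eq_zero : μ u = 0
  pow_succ_eq_zero : u ^ (n + 1) = 0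
  dvd_of_map_eq_zero : ∀ r, μ r = 0 → u ∣ r
  dvd_of_pow_mul_eq_zero : ∀ r, u ^ n * r = 0 → u ∣ r

/-- The `i`-th torsion code `Tor_i(C) = {μ f | uⁱ f ∈ C}` of an ideal `C`, encoded as an
ideal of `K`; for surjective `μ` the set is already an ideal, see `coe_torsionCode`. -/
def torsionCode (μ : R →+* K) (u : R) (C : Ideal R) (i : ℕ) : Ideal K :=
  (Submodule.colon C {u ^ i}).map μ

variable {μ : R →+* K} {u : R} {n : ℕ} {C : Ideal R}

theorem coe_torsionCode (hμ : Function.Surjective μ) (C : Ideal R) (i : ℕ) :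
    (torsionCode μ u C i : Set K) = μ '' {f | u ^ i * f ∈ C} := by
  ext k
  simp [torsionCode, Ideal.mem_map_iff_of_surjective μ hμ, mul_comm]

namespace IsFlatThickening

theorem map_eq_zero_iff_dvd (h : IsFlatThickening μ u n) (r : R) : μ r = 0 ↔ u ∣ r := by
  refine ⟨h.dvd_of_map_eq_zero r, ?_⟩
  rintro ⟨w, rfl⟩
  rw [map_mul, h.map_eq_zero, zero_mul]

theorem pow_mul_eq_zero_iff_map_eq_zero (h : IsFlatThickening μ u n) (r : R) :
    u ^ n * r = 0 ↔ μ r = 0 := by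
  rw [h.map_eq_zero_iff_dvd]
  refine ⟨h.dvd_of_pow_mul_eq_zero r, ?_⟩
  rintro ⟨w, rfl⟩
  rw [← mul_assoc, ← pow_succ, h.pow_succ_eq_zero, zero_mul]

theorem mem_torsionCode (h : IsFlatThickening μ u n) {i : ℕ} {k : K} :
    k ∈ torsionCode μ u C i ↔ ∃ d, u ^ i * d ∈ C ∧ μ d = k := by
  rw [← SetLike.mem_coe, coe_torsionCode h.surjective]
  rfl

theorem map_mem_annihilator_torsionCode (h : IsFlatThickening μ u n) {i j : ℕ} (hij : i + j = n)
    {c : R} (hc : u ^ i * c ∈ C.annihilator) : μ c ∈ (torsionCode μ u C j).annihilator := by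
  refine Submodule.mem_annihilator.2 fun k hk ↦ ?_
  obtain ⟨d, hd, rfl⟩ := h.mem_torsionCode.1 hk
  have hcd : u ^ i * c * (u ^ j * d) = 0 := Submodule.mem_annihilator.1 hc _ hd
  rw [smul_eq_mul, ← map_mul, ← h.pow_mul_eq_zero_iff_map_eq_zero, ← hij, pow_add]
  linear_combination hcd

theorem pow_mul_mem_annihilator (h : IsFlatThickening μ u n) {c : R}
    (hc : μ c ∈ (torsionCode μ u C 0).annihilator) : u ^ n * c ∈ C.annihilator := by
  refine Submodule.mem_annihilator.2 fun d hd ↦ ?_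
  have hd₀ : μ d ∈ torsionCode μ u C 0 := h.mem_torsionCode.2 ⟨d, by simpa using hd, rfl⟩
  rw [smul_eq_mul, mul_assoc, h.pow_mul_eq_zero_iff_map_eq_zero, map_mul]
  exact Submodule.mem_annihilator.1 hc _ hd₀

theorem exists_eq_mul_add_mul (h : IsFlatThickening μ u n) {c g : R}
    (hc : μ c ∈ Ideal.span {μ g}) : ∃ q w, c = q * g + u * w := by
  obtain ⟨k, hk⟩ := Ideal.mem_span_singleton'.1 hc
  obtain ⟨q, rfl⟩ := h.surjective k
  obtain ⟨w, hw⟩ := h.dvd_of_map_eq_zero (c - q * g) (by rw [map_sub, map_mul, hk, sub_self])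
  exact ⟨q, w, by rw [← hw, add_sub_cancel]⟩

theorem annihilator_eq_span_range (h : IsFlatThickening μ u n) (g : Fin (n + 1) → R)
    (hg : ∀ i : Fin (n + 1), u ^ (i : ℕ) * g i ∈ C.annihilator)
    (hT : ∀ i : Fin (n + 1), (torsionCode μ u C i.rev).annihilator ≤ Ideal.span {μ (g i)}) :
    C.annihilator = Ideal.span (Set.range fun i : Fin (n + 1) ↦ u ^ (i : ℕ) * g i) := by
  set J := Ideal.span (Set.range fun i : Fin (n + 1) ↦ u ^ (i : ℕ) * g i)
  have divide (i : ℕ) (hi : i ≤ n + 1) : ∀ c, u ^ i * c ∈ C.annihilator → u ^ i * c ∈ J := by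
    induction hi using Nat.decreasingInduction with
    | self => simp [h.pow_succ_eq_zero]
    | of_succ i hi ih =>
      intro c hc
      have hrev : i + (Fin.rev ⟨i, hi⟩ : Fin (n + 1)) = n := by
        simp only [Fin.val_rev]
        omega
      have hres : μ c ∈ Ideal.span {μ (g ⟨i, hi⟩)} :=
        hT ⟨i, hi⟩ (h.map_mem_annihilator_torsionCode hrev hc)
      obtain ⟨q, w, rfl⟩ := h.exists_eq_mul_add_mul hres
      have split : u ^ i * (q * g ⟨i, hi⟩ + u * w) =
          q * (u ^ i * g ⟨i, hi⟩) + u ^ (i + 1) * w := by ring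
      rw [split] at hc ⊢
      have hw : u ^ (i + 1) * w ∈ C.annihilator :=
        (Ideal.add_mem_iff_right _ (Ideal.mul_mem_left _ q (hg ⟨i, hi⟩))).1 hc
      exact J.add_mem (J.mul_mem_left q (Ideal.subset_span ⟨⟨i, hi⟩, rfl⟩)) (ih w hw)
  refine le_antisymm (fun c hc ↦ ?_) (Ideal.span_le.2 (Set.range_subset_iff.2 hg))
  simpa using divide 0 (Nat.zero_le _) c (by simpa using hc)

end IsFlatThickening

end Thickening

section AdjoinRoot

variable {A F : Type*} [CommRing A] [CommRing F]

theorem adjoinRootMap_mk {φ : A →+* F} {f : A[X]} {q : F[X]} (h : q ∣ f.map φ) (p : A[X]) :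
    AdjoinRoot.map φ f q h (AdjoinRoot.mk f p) = AdjoinRoot.mk q (p.map φ) := by
  rw [AdjoinRoot.map, AdjoinRoot.lift_mk, ← eval₂_map]
  exact AdjoinRoot.aeval_eq _

theorem isFlatThickening_adjoinRoot_X_pow (F : Type*) [CommRing F] (n : ℕ) :
    IsFlatThickening
      (AdjoinRoot.lift (RingHom.id F) 0 (by simp) : AdjoinRoot (X ^ (n + 1) : F[X]) →+* F)
      (AdjoinRoot.root _) n := by
  have root_dvd_mk {p : F[X]} (hp : X ∣ p) :
      AdjoinRoot.root (X ^ (n + 1)) ∣ AdjoinRoot.mk (X ^ (n + 1)) p :=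
    map_dvd (AdjoinRoot.mk (X ^ (n + 1))) hp
  refine ⟨fun a ↦ ⟨AdjoinRoot.of _ a, by simp⟩, by simp, ?_, fun r hr ↦ ?_, fun r hr ↦ ?_⟩
  · rw [← AdjoinRoot.mk_X, ← map_pow, AdjoinRoot.mk_self]
  · obtain ⟨p, rfl⟩ := AdjoinRoot.mk_surjective r
    rw [AdjoinRoot.lift_mk, eval₂_id, ← coeff_zero_eq_eval_zero] at hr
    exact root_dvd_mk (X_dvd_iff.2 hr)
  · obtain ⟨p, rfl⟩ := AdjoinRoot.mk_surjective r
    rw [← AdjoinRoot.mk_X, ← map_pow, ← map_mul, AdjoinRoot.mk_eq_zero, pow_succ,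
      (monic_X_pow n).isRegular.left.dvd_cancel_left] at hr
    exact root_dvd_mk hr

theorem IsFlatThickening.mapRingHom {φ : A →+* F} {u : A} {n : ℕ}
    (h : IsFlatThickening φ u n) : IsFlatThickening (Polynomial.mapRingHom φ) (C u) n where
  surjective := map_surjective φ h.surjective
  map_eq_zero := by simp [h.map_eq_zero]
  pow_succ_eq_zero := by rw [← C_pow, h.pow_succ_eq_zero, C_0]
  dvd_of_map_eq_zero p hp := (C_dvd_iff_dvd_coeff u p).2 fun i ↦
    h.dvd_of_map_eq_zero _ (by rw [← coeff_map, ← coe_mapRingHom, hp, coeff_zero])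
  dvd_of_pow_mul_eq_zero p hp := (C_dvd_iff_dvd_coeff u p).2 fun i ↦
    h.dvd_of_pow_mul_eq_zero _ (by rw [← coeff_C_mul, C_pow, hp, coeff_zero])

theorem IsFlatThickening.adjoinRootMap {φ : A →+* F} {u : A} {n : ℕ}
    (h : IsFlatThickening φ u n) {f : A[X]} (hf : f.Monic) {q : F[X]} (hq : f.map φ = q) :
    IsFlatThickening (AdjoinRoot.map φ f q hq.symm.dvd) (AdjoinRoot.of f u) n := by
  have hX := h.mapRingHom
  have of_dvd_mk {p : A[X]} (hp : C u ∣ p) : AdjoinRoot.of f u ∣ AdjoinRoot.mk f p :=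
    map_dvd (AdjoinRoot.mk f) hp
  refine ⟨fun k ↦ ?_, by simp [h.map_eq_zero], ?_, fun r hr ↦ ?_, fun r hr ↦ ?_⟩
  · obtain ⟨p, rfl⟩ := AdjoinRoot.mk_surjective k
    obtain ⟨p, rfl⟩ := hX.surjective p
    exact ⟨AdjoinRoot.mk f p, adjoinRootMap_mk _ p⟩
  · rw [← map_pow, h.pow_succ_eq_zero, map_zero]
  · obtain ⟨p, rfl⟩ := AdjoinRoot.mk_surjective r
    rw [adjoinRootMap_mk, AdjoinRoot.mk_eq_zero, ← hq] at hr
    obtain ⟨k, hk⟩ := hr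
    obtain ⟨k, rfl⟩ := hX.surjective k
    have hdvd : C u ∣ p - f * k := hX.dvd_of_map_eq_zero _ (by simp [hk])
    simpa using of_dvd_mk hdvd
  · obtain ⟨p, rfl⟩ := AdjoinRoot.mk_surjective r
    have hp : AdjoinRoot.mk f p = AdjoinRoot.mk f (p %ₘ f) :=
      AdjoinRoot.mk_eq_mk.2 (dvd_sub_comm.1 (dvd_modByMonic_sub p f))
    have hrem : C u ^ n * (p %ₘ f) = 0 := by
      rw [← C_pow, ← smul_eq_C_mul, ← smul_modByMonic, modByMonic_eq_zero_iff_dvd hf,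
        smul_eq_C_mul, ← AdjoinRoot.mk_eq_zero, map_mul, AdjoinRoot.mk_C, map_pow, hr]
    exact hp ▸ of_dvd_mk (hX.dvd_of_pow_mul_eq_zero _ hrem)

theorem annihilator_span_mk {f p q : F[X]} (hf : p * q = f) (hp : IsLeftRegular p) :
    (Ideal.span {AdjoinRoot.mk f p}).annihilator = Ideal.span {AdjoinRoot.mk f q} := by
  ext z
  obtain ⟨r, rfl⟩ := AdjoinRoot.mk_surjective z
  have hqf : q ∣ f := Dvd.intro_left p hf
  rw [Submodule.mem_annihilator_span_singleton, smul_eq_mul, ← map_mul, AdjoinRoot.mk_eq_zero,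
    ← hf, mul_comm r, hp.dvd_cancel_left, hf, Ideal.mem_span_singleton]
  refine ⟨map_dvd _, fun ⟨w, hw⟩ ↦ ?_⟩
  obtain ⟨w, rfl⟩ := AdjoinRoot.mk_surjective w
  rw [← map_mul, AdjoinRoot.mk_eq_mk] at hw
  exact (dvd_iff_dvd_of_dvd_sub (hqf.trans hw)).2 (dvd_mul_right q w)

end AdjoinRoot

theorem stmt6_general {R K : Type*} [CommRing R] [CommRing K] {μ : R →+* K} {u : R}
    (h : IsFlatThickening μ u 2) (C : Ideal R) {y : R} {N : ℕ}
    (hy : ∀ i j, i + j = N → (Ideal.span {μ y ^ i}).annihilator = Ideal.span {μ y ^ j})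
    {t₀ t₁ t₂ e₀ e₁ e₂ : ℕ} (h₀ : t₂ + e₀ = N) (h₁ : t₁ + e₁ = N) (h₂ : t₀ + e₂ = N)
    (hT₀ : torsionCode μ u C 0 = Ideal.span {μ y ^ t₀})
    (hT₁ : torsionCode μ u C 1 = Ideal.span {μ y ^ t₁})
    (hT₂ : torsionCode μ u C 2 = Ideal.span {μ y ^ t₂})
    {f₁ f₂ f₃ : R} (hf₁₂ : y ^ e₀ + u * f₁ + u ^ 2 * f₂ ∈ C.annihilator)
    (hf₃ : u * y ^ e₁ + u ^ 2 * f₃ ∈ C.annihilator) :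
    C.annihilator = Ideal.span
      {y ^ e₀ + u * f₁ + u ^ 2 * f₂, u * y ^ e₁ + u ^ 2 * f₃, u ^ 2 * y ^ e₂} := by
  have factor : u * y ^ e₁ + u ^ 2 * f₃ = u * (y ^ e₁ + u * f₃) := by ring
  have last : u ^ 2 * y ^ e₂ ∈ C.annihilator := h.pow_mul_mem_annihilator <| by
    rw [hT₀, hy _ _ h₂, map_pow]
    exact Ideal.mem_span_singleton_self _
  rw [factor] at hf₃ ⊢
  have hspan := h.annihilator_eq_span_range (C := C)
    ![y ^ e₀ + u * f₁ + u ^ 2 * f₂, y ^ e₁ + u * f₃, y ^ e₂]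
    (by simpa [Fin.forall_fin_succ] using ⟨hf₁₂, hf₃, last⟩)
    (by simp [Fin.forall_fin_succ, Fin.val_rev, hT₀, hT₁, hT₂, hy _ _ h₀, hy _ _ h₁, hy _ _ h₂,
      h.map_eq_zero])
  rw [hspan]
  congr 1
  ext c
  simp [Fin.exists_fin_succ, eq_comm]

theorem isFlatThickening_muRK (m s : ℕ) : IsFlatThickening (muRK m s) (uR m s) 2 :=
  (isFlatThickening_adjoinRoot_X_pow (Fq m) 2).adjoinRootMap (gR_monic m s) (by simp)

theorem muRK_xR_add_one (m s : ℕ) : muRK m s (xR m s + 1) = xK m s + 1 := by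
  simp [muRK, xR]

theorem annihilator_span_xK_add_one_pow (m s : ℕ) {i j : ℕ} (hij : i + j = 2 ^ s) :
    (Ideal.span {(xK m s + 1) ^ i}).annihilator = Ideal.span {(xK m s + 1) ^ j} := by
  have hfactor : (X + 1 : (Fq m)[X]) ^ i * (X + 1) ^ j = gK m s := by
    rw [← pow_add, hij, add_pow_char_pow, one_pow]
  have hmonic : ((X + 1 : (Fq m)[X]) ^ i).Monic := (monic_X_add_C 1).pow i
  simpa only [map_pow, map_add, map_one] using! annihilator_span_mk hfactor hmonic.isRegular.left

theorem torSet_eq_coe_torsionCode (m s : ℕ) (C : Ideal (RR m s)) (i : ℕ) :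
    TorSet m s C i = torsionCode (muRK m s) (uR m s) C i :=
  (coe_torsionCode (isFlatThickening_muRK m s).surjective C i).symm

theorem annSet_eq_coe_annihilator (m s : ℕ) (C : Ideal (RR m s)) :
    annSet m s C = C.annihilator := by
  ext c
  simp [annSet, Submodule.mem_annihilator]

/-- If `C` is an ideal of `𝓡` with the prescribed torsion codes and the two
displayed elements lie in `𝒜(C)`, then `𝒜(C)` is the ideal generated by them together
with `u²(x+1)^{2^s−a}`. -/
theorem stmt6 (m s : ℕ) (hm : 0 < m) (hs : 0 < s)
    (a : ℕ) (ha1 : 1 ≤ a) (ha2 : a ≤ 2 ^ s - 1)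
    (C : Ideal (RR m s))
    (hT0 : TorSet m s (C : Set (RR m s)) 0 =
      ((Ideal.span {(xK m s + 1) ^ a} : Ideal (KK m s)) : Set (KK m s)))
    (hT1 : TorSet m s (C : Set (RR m s)) 1 =
      ((Ideal.span {(xK m s + 1) ^ (2 ^ (s - 1))} : Ideal (KK m s)) : Set (KK m s)))
    (hT2 : TorSet m s (C : Set (RR m s)) 2 =
      ((Ideal.span {(xK m s + 1) ^ (2 ^ s - a)} : Ideal (KK m s)) : Set (KK m s)))
    (f₁ f₂ f₃ : KK m s)
    (hf12 : (xR m s + 1) ^ a + uR m s * KtoR m s f₁ + uR m s ^ 2 * KtoR m s f₂ ∈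
      annSet m s (C : Set (RR m s)))
    (hf3 : uR m s * (xR m s + 1) ^ (2 ^ (s - 1)) + uR m s ^ 2 * KtoR m s f₃ ∈
      annSet m s (C : Set (RR m s))) :
    annSet m s (C : Set (RR m s)) =
      ((Ideal.span
        {(xR m s + 1) ^ a + uR m s * KtoR m s f₁ + uR m s ^ 2 * KtoR m s f₂,
         uR m s * (xR m s + 1) ^ (2 ^ (s - 1)) + uR m s ^ 2 * KtoR m s f₃,
         uR m s ^ 2 * (xR m s + 1) ^ (2 ^ s - a)} : Ideal (RR m s)) : Set (RR m s)) := by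
  simp only [torSet_eq_coe_torsionCode, annSet_eq_coe_annihilator, SetLike.coe_set_eq,
    SetLike.mem_coe, ← muRK_xR_add_one] at hT0 hT1 hT2 hf12 hf3 ⊢
  exact stmt6_general (isFlatThickening_muRK m s) C
    (fun i j hij ↦ by rw [muRK_xR_add_one, annihilator_span_xK_add_one_pow m s hij])
    (Nat.sub_add_cancel (ha2.trans (Nat.sub_le _ _))) (Nat.two_pow_pred_add_two_pow_pred hs)
    (Nat.add_sub_cancel' (ha2.trans (Nat.sub_le _ _))) hT0 hT1 hT2 hf12 hf3
end
end
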